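/- For any positive integers n and s, there exist s distinct primes l_1,…,l_s such that l_i ≡ 1 (mod n) for all i, and for all i ≠ j, the prime l_i is an n-th power residue modulo l_j (i.e., there exists y with y^n ≡ l_i (mod l_j)). -/

import Mathlib

open Polynomial NumberField

/-- For a nonzero algebraic integer `b`, some `1 - t b` with `t` a nonzero integer is not a unit. -/
theorem aux_nonunit {K : Type*} [Field K] [NumberField K] (b : 𝓞 K) (hb : b ≠ 0) :
    ∃ t : ℕ, ¬ IsUnit (1 - (t : 𝓞 K) * b) := by
  classical
  have hbK : (b : K) ≠ 0 := by simpa using hb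
  have h1 : ∀ σ : K →ₐ[ℚ] ℂ, ∃ t0 : ℕ, ∀ t ≥ t0, 1 < ‖σ (1 - (t : K) * (b : K))‖ := by
    intro σ
    have hσ : 0 < ‖σ (b : K)‖ := by
      rw [norm_pos_iff]; simpa using hb
    obtain ⟨t0, ht0⟩ := exists_nat_gt (2 / ‖σ (b : K)‖)
    refine ⟨t0, fun t ht => ?_⟩
    have h2 : 2 < (t : ℝ) * ‖σ (b : K)‖ := by
      rw [div_lt_iff₀ hσ] at ht0
      have : (t0 : ℝ) ≤ t := by exact_mod_cast ht
      nlinarith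
    have h3 : ‖(t : ℂ) * σ (b : K)‖ - ‖(1 : ℂ)‖ ≤ ‖(1 : ℂ) - (t : ℂ) * σ (b : K)‖ := by
      rw [norm_sub_rev]; exact norm_sub_norm_le _ _
    rw [map_sub, map_mul, map_one, map_natCast]
    rw [norm_mul, Complex.norm_natCast, norm_one] at h3
    linarith
  choose t0 ht0 using h1
  refine ⟨∑ σ, t0 σ, fun hu => ?_⟩
  set t := ∑ σ, t0 σ
  rw [NumberField.isUnit_iff_norm, RingOfIntegers.coe_norm] at hu
  have h4 := Algebra.norm_eq_prod_embeddings ℚ ℂ (((1 - (t : 𝓞 K) * b : 𝓞 K)) : K)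
  have h5 : ‖algebraMap ℚ ℂ (Algebra.norm ℚ (((1 - (t : 𝓞 K) * b : 𝓞 K)) : K))‖ = 1 := by
    rw [eq_ratCast, Complex.norm_ratCast]
    exact_mod_cast hu
  rw [h4, norm_prod] at h5
  have h6 : (1 : ℝ) < ∏ σ : K →ₐ[ℚ] ℂ, ‖σ (((1 - (t : 𝓞 K) * b : 𝓞 K)) : K)‖ := by
    have hlt : ∀ σ : K →ₐ[ℚ] ℂ, 1 < ‖σ (((1 - (t : 𝓞 K) * b : 𝓞 K)) : K)‖ := by
      intro σ
      have := ht0 σ t (Finset.single_le_sum (f := t0) (fun _ _ => Nat.zero_le _) (Finset.mem_univ σ))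
      simpa using this
    have hne : (Finset.univ : Finset (K →ₐ[ℚ] ℂ)).Nonempty := by
      refine ⟨IsAlgClosed.lift, Finset.mem_univ _⟩
    have := Finset.prod_lt_prod_of_nonempty (s := (Finset.univ : Finset (K →ₐ[ℚ] ℂ)))
      (f := fun _ => (1 : ℝ)) (g := fun σ => ‖σ (((1 - (t : 𝓞 K) * b : 𝓞 K)) : K)‖)
      (fun _ _ => one_pos) (fun σ _ => hlt σ) hne
    simpa using this
  linarith

theorem aux_int_mult {K : Type*} [Field K] [NumberField K] (x : K) :
    ∃ (c : ℤ) (y : 𝓞 K), c ≠ 0 ∧ (c : K) * x = y := by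
  obtain ⟨⟨a, c⟩, h⟩ := IsLocalization.surj (Algebra.algebraMapSubmonoid (𝓞 K) (nonZeroDivisors ℤ)) x
  obtain ⟨c, m, hm, rfl⟩ := c
  refine ⟨m, a, by simpa using hm, ?_⟩
  rw [mul_comm]
  simpa using h

/-- A nonzero integral primitive element, with integral relations. -/
theorem aux_primitive (K : Type*) [Field K] [NumberField K] :
    ∃ α : 𝓞 K, α ≠ 0 ∧ ∀ x : 𝓞 K, ∃ (d : ℤ) (q : ℤ[X]), d ≠ 0 ∧ (d : 𝓞 K) * x = aeval α q := by
  obtain ⟨a0, ha0⟩ := Field.exists_primitive_element ℚ K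
  have key : ∃ a : K, a ≠ 0 ∧ ∀ x : K, ∃ q : ℚ[X], aeval a q = x := by
    have h0 : ∀ x : K, ∃ q : ℚ[X], aeval a0 q = x := by
      intro x
      have h1 := IntermediateField.adjoin_simple_toSubalgebra_of_isAlgebraic
        (F := ℚ) (α := a0) (Algebra.IsAlgebraic.isAlgebraic a0)
      rw [ha0, Algebra.adjoin_singleton_eq_range_aeval] at h1
      have : x ∈ (aeval a0 : ℚ[X] →ₐ[ℚ] K).range := by rw [← h1]; simp
      exact this
    by_cases h : a0 = 0
    · refine ⟨1, one_ne_zero, fun x => ?_⟩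
      obtain ⟨q, hq⟩ := h0 x
      refine ⟨q.comp (X - 1), ?_⟩
      rw [aeval_comp, ← hq, h]; simp
    · exact ⟨a0, h, h0⟩
  obtain ⟨a, ha, hq⟩ := key
  obtain ⟨c, α, hc, hα⟩ := aux_int_mult a
  have hcK : (c : K) ≠ 0 := by exact_mod_cast hc
  refine ⟨α, ?_, fun x => ?_⟩
  · rintro rfl
    simp [hc, ha] at hα
  · obtain ⟨q, hq⟩ := hq x
    let r : ℚ[X] := q.comp (C (c : ℚ)⁻¹ * X)
    have hr : aeval (α : K) r = x := by
      rw [aeval_comp, ← hq]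
      congr 2
      rw [← hα]
      simp [hcK]
    obtain ⟨d, hd, h⟩ := IsLocalization.integerNormalization_spec (nonZeroDivisors ℤ) r
    refine ⟨d, IsLocalization.integerNormalization (nonZeroDivisors ℤ) r, by simpa using hd, ?_⟩
    apply RingOfIntegers.ext
    have h2 := congrArg (aeval (α : K)) h
    rw [aeval_map_algebraMap, map_zsmul, hr] at h2
    have h3 := aeval_algebraMap_apply K α (IsLocalization.integerNormalization (nonZeroDivisors ℤ) r)
    rw [h2] at h3
    refine Eq.trans ?_ h3
    simp

theorem aux_core (K : Type*) [Field K] [NumberField K] (S : Finset ℤ[X]) (x : ℤ[X] → 𝓞 K)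
    (hx : ∀ g ∈ S, aeval (x g) g = 0) (M : ℕ) (hM : M ≠ 0) :
    ∃ p : ℕ, p.Prime ∧ ¬ p ∣ M ∧ ∀ g ∈ S, ∃ a : ZMod p, (g.map (Int.castRingHom (ZMod p))).eval a = 0 := by
  classical
  obtain ⟨α, hα, hrel⟩ := aux_primitive K
  choose d q hd hq using hrel
  let D : ℤ := M * ∏ g ∈ S, d (x g)
  have hD : D ≠ 0 := mul_ne_zero (by exact_mod_cast hM) (Finset.prod_ne_zero_iff.2 fun g _ => hd _)
  obtain ⟨t, ht⟩ := aux_nonunit ((D : 𝓞 K) * α) (mul_ne_zero (by exact_mod_cast hD) hα)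
  obtain ⟨P, hP, hmem⟩ := exists_max_ideal_of_mem_nonunits ht
  have hPbot : P ≠ ⊥ := Ring.ne_bot_of_isMaximal_of_not_isField hP (RingOfIntegers.not_isField K)
  let : Field (𝓞 K ⧸ P) := Ideal.Quotient.field P
  have : Finite (𝓞 K ⧸ P) := Ideal.finiteQuotientOfFreeOfNeBot P hPbot
  obtain ⟨p, hpc⟩ := CharP.exists (𝓞 K ⧸ P)
  have hp : p.Prime := (CharP.char_is_prime_or_zero (𝓞 K ⧸ P) p).resolve_right
    (CharP.char_ne_zero_of_finite (𝓞 K ⧸ P) p)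
  have : Fact p.Prime := ⟨hp⟩
  let π := Ideal.Quotient.mk P
  let φ : ZMod p →+* (𝓞 K ⧸ P) := ZMod.castHom dvd_rfl _
  have h1 : (t : 𝓞 K ⧸ P) * ((D : 𝓞 K ⧸ P) * π α) = 1 := by
    have := Ideal.Quotient.eq_zero_iff_mem.2 hmem
    rw [map_sub, map_mul, map_mul, map_one, map_natCast, map_intCast, sub_eq_zero] at this
    exact this.symm
  have hDF : (D : 𝓞 K ⧸ P) ≠ 0 := by
    intro h; rw [h] at h1; simp at h1
  have hDF' : (M : 𝓞 K ⧸ P) * ∏ g ∈ S, (d (x g) : 𝓞 K ⧸ P) ≠ 0 := by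
    simpa [D] using hDF
  have hαr : π α ∈ φ.fieldRange := by
    have : π α = ((t : 𝓞 K ⧸ P) * (D : 𝓞 K ⧸ P))⁻¹ := by
      refine eq_inv_of_mul_eq_one_right ?_
      rw [← h1]; ring
    rw [this]
    exact inv_mem (mul_mem (natCast_mem _ _) (intCast_mem _ _))
  refine ⟨p, hp, ?_, fun g hg => ?_⟩
  · intro h
    exact left_ne_zero_of_mul hDF' ((CharP.cast_eq_zero_iff _ p M).2 h)
  · have hdF : (d (x g) : 𝓞 K ⧸ P) ≠ 0 :=
      (Finset.prod_ne_zero_iff.1 (right_ne_zero_of_mul hDF')) g hg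
    have hxr : π (x g) ∈ φ.fieldRange := by
      have h2 : (d (x g) : 𝓞 K ⧸ P) * π (x g) = eval₂ (Int.castRingHom _) (π α) (q (x g)) := by
        have := congrArg π (hq (x g))
        rw [map_mul, map_intCast, aeval_def, hom_eval₂] at this
        rw [this]
        congr 1
      have h3 : eval₂ (Int.castRingHom _) (π α) (q (x g)) ∈ φ.fieldRange := by
        rw [eval₂_eq_sum_range]
        exact sum_mem fun i _ => mul_mem (intCast_mem _ _) (pow_mem hαr _)
      have h4 : π (x g) = (d (x g) : 𝓞 K ⧸ P)⁻¹ * eval₂ (Int.castRingHom _) (π α) (q (x g)) := by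
        rw [← h2, inv_mul_cancel_left₀ hdF]
      rw [h4]
      exact mul_mem (inv_mem (intCast_mem _ _)) h3
    obtain ⟨a, ha⟩ := hxr
    refine ⟨a, φ.injective ?_⟩
    rw [map_zero, eval_map, hom_eval₂, ha]
    have := congrArg π (hx g hg)
    rw [map_zero, aeval_def, hom_eval₂] at this
    rw [← this]
    congr 1
    exact RingHom.ext_int _ _

theorem aux_prime (S : Finset ℤ[X]) (hS : ∀ g ∈ S, g.Monic ∧ g.natDegree ≠ 0) (M : ℕ) (hM : M ≠ 0) :
    ∃ p : ℕ, p.Prime ∧ ¬ p ∣ M ∧ ∀ g ∈ S, ∃ a : ZMod p, (g.map (Int.castRingHom (ZMod p))).eval a = 0 := by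
  classical
  let G : ℚ[X] := ∏ g ∈ S, g.map (Int.castRingHom ℚ)
  let K := G.SplittingField
  have : NumberField K := { to_charZero := inferInstance, to_finiteDimensional := inferInstance }
  have hG0 : G ≠ 0 := Finset.prod_ne_zero_iff.2 fun g hg => ((hS g hg).1.map _).ne_zero
  have hroot : ∀ g ∈ S, ∃ x : 𝓞 K, aeval x g = 0 := by
    intro g hg
    have hs : ((g.map (Int.castRingHom ℚ)).map (algebraMap ℚ K)).Splits := by
      refine (SplittingField.splits G).of_dvd (Polynomial.map_ne_zero hG0) ?_
      exact Polynomial.map_dvd _ (Finset.dvd_prod_of_mem _ hg)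
    obtain ⟨x, hx⟩ := hs.exists_eval_eq_zero (by
      rw [degree_map, (hS g hg).1.degree_map]
      rw [degree_eq_natDegree (hS g hg).1.ne_zero]
      exact_mod_cast (hS g hg).2)
    have hx' : aeval x g = 0 := by
      rw [Polynomial.map_map, eval_map] at hx
      rw [aeval_def, ← hx]
      congr 1
    have hint : IsIntegral ℤ x := ⟨g, (hS g hg).1, by simpa [aeval_def] using hx'⟩
    obtain ⟨y, rfl⟩ : ∃ y : 𝓞 K, algebraMap (𝓞 K) K y = x := ⟨⟨x, hint⟩, rfl⟩
    refine ⟨y, ?_⟩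
    rw [aeval_algebraMap_apply] at hx'
    exact (map_eq_zero_iff _ (RingOfIntegers.coe_injective)).1 hx'
  choose! x hx using hroot
  exact aux_core K S x hx M hM

theorem aux_main (n s : ℕ) (hn : 0 < n) :
    ∃ l : Fin s → ℕ, Function.Injective l ∧
      (∀ i, (l i).Prime ∧ l i ≡ 1 [MOD n]) ∧
      (∀ i j, i ≠ j → ∃ y : ℕ, y ^ n ≡ l i [MOD l j]) := by
  classical
  induction s with
  | zero => exact ⟨fun i => i.elim0, fun i => i.elim0, fun i => i.elim0, fun i => i.elim0⟩
  | succ s ih =>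
    obtain ⟨l, hinj, hl, hres⟩ := ih
    let m := n * ∏ i, l i
    have hm : m ≠ 0 := mul_ne_zero hn.ne' (Finset.prod_ne_zero_iff.2 fun i _ => (hl i).1.ne_zero)
    obtain ⟨p, hp, hpm, hr⟩ := aux_prime
      (insert (cyclotomic m ℤ) (Finset.univ.image fun i => (X ^ n - C (l i : ℤ) : ℤ[X]))) (by
        intro g hg
        rw [Finset.mem_insert, Finset.mem_image] at hg
        rcases hg with rfl | ⟨i, -, rfl⟩
        · refine ⟨cyclotomic.monic _ _, ?_⟩
          rw [natDegree_cyclotomic]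
          exact (Nat.totient_pos.2 (Nat.pos_of_ne_zero hm)).ne'
        · exact ⟨monic_X_pow_sub_C _ hn.ne', by rw [natDegree_X_pow_sub_C]; exact hn.ne'⟩) m hm
    have : Fact p.Prime := ⟨hp⟩
    have hmod : m ∣ p - 1 := by
      obtain ⟨a, ha⟩ := hr _ (Finset.mem_insert_self _ _)
      rw [map_cyclotomic] at ha
      have : NeZero (m : ZMod p) := ⟨by rwa [Ne, CharP.cast_eq_zero_iff (ZMod p) p]⟩
      have hprim : IsPrimitiveRoot a m := isRoot_cyclotomic_iff.1 ha
      rw [hprim.eq_orderOf]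
      exact ZMod.orderOf_dvd_card_sub_one (hprim.ne_zero hm)
    have hp1 : p ≡ 1 [MOD m] := ((Nat.modEq_iff_dvd' hp.one_le).2 hmod).symm
    have hdvd : ∀ i, l i ∣ m := fun i =>
      Dvd.dvd.mul_left (Finset.dvd_prod_of_mem _ (Finset.mem_univ i)) _
    refine ⟨Fin.cons p l, ?_, ?_, ?_⟩
    · rw [Fin.cons_injective_iff]
      refine ⟨?_, hinj⟩
      rintro ⟨i, rfl⟩
      exact hpm (hdvd i)
    · intro i
      refine Fin.cases ?_ (fun i => ?_) i
      · exact ⟨hp, hp1.of_mul_right _⟩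
      · simpa using hl i
    · intro i j
      refine Fin.cases ?_ (fun i => ?_) i <;> refine Fin.cases ?_ (fun j => ?_) j
      · intro h; exact absurd rfl h
      · intro _
        refine ⟨1, ?_⟩
        simpa using (hp1.of_dvd (hdvd j)).symm
      · intro _
        obtain ⟨a, ha⟩ := hr (X ^ n - C (l i : ℤ))
          (Finset.mem_insert_of_mem (Finset.mem_image_of_mem _ (Finset.mem_univ i)))
        refine ⟨a.val, ?_⟩
        simp only [Fin.cons_zero, Fin.cons_succ]
        rw [← ZMod.natCast_eq_natCast_iff]
        simpa [sub_eq_zero] using ha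
      · intro h
        simpa using hres i j (fun e => h (by rw [e]))

theorem stmt_4 (n s : ℕ) (hn : 0 < n) (hs : 0 < s) :
    ∃ l : Fin s → ℕ, Function.Injective l ∧
      (∀ i, (l i).Prime ∧ l i ≡ 1 [MOD n]) ∧
      (∀ i j, i ≠ j → ∃ y : ℕ, y ^ n ≡ l i [MOD l j]) := by
  exact aux_main n s hn
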